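/- Let H = (V,S) be a spatial hypergraph with |S| = k hyperedges, and for each hyperedge s ∈ S let T_s be a Euclidean minimum spanning tree of s. Then the graph G on V whose edge set is the union of the edge sets of the trees T_s (s ∈ S) is a support of H, and for every support G* of H the total length of G is at most k times the total length of G*. -/

import Mathlib

noncomputable section

/-- Points in the Euclidean plane. -/
abbrev Pt : Type := EuclideanSpace ℝ (Fin 2)

noncomputable instance : DecidableEq Pt := Classical.decEq _

/-- Length of an edge (an unordered pair of points): the Euclidean distance
between its endpoints. -/
def edgeLen : Sym2 Pt → ℝ := Sym2.lift ⟨fun u v => dist u v, fun u v => dist_comm u v⟩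

/-- Total length of a graph given by its finite edge set: the sum of the Euclidean
lengths of its edges. -/
def graphLength (E : Finset (Sym2 Pt)) : ℝ := ∑ e ∈ E, edgeLen e

/-- Closed straight-line segment joining the endpoints of an edge. -/
def edgeSeg : Sym2 Pt → Set Pt :=
  Sym2.lift ⟨fun u v => segment ℝ u v, fun u v => segment_symm ℝ u v⟩

/-- The edges in `E` are unordered pairs of distinct points of `V`. -/
def EdgesOn (V : Finset Pt) (E : Finset (Sym2 Pt)) : Prop :=
  ∀ e ∈ E, ¬ e.IsDiag ∧ ∀ p ∈ e, p ∈ V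

/-- The subgraph induced by `s` of the graph with edge set `E` is connected. -/
def InducedConnected (E : Finset (Sym2 Pt)) (s : Finset Pt) : Prop :=
  ((SimpleGraph.fromEdgeSet (↑E : Set (Sym2 Pt))).induce (↑s : Set Pt)).Connected

/-- The graph with edge set `E` is a tree (connected and acyclic) on vertex set `V`. -/
def IsTreeOn (V : Finset Pt) (E : Finset (Sym2 Pt)) : Prop :=
  ((SimpleGraph.fromEdgeSet (↑E : Set (Sym2 Pt))).induce (↑V : Set Pt)).IsTree

/-- The straight-line drawing of the graph with edge set `E` is plane: the closed
straight-line segments of any two distinct edges intersect only in points that are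
endpoints of both edges. -/
def IsPlane (E : Finset (Sym2 Pt)) : Prop :=
  ∀ e ∈ E, ∀ f ∈ E, e ≠ f → ∀ x ∈ edgeSeg e ∩ edgeSeg f, x ∈ e ∧ x ∈ f

/-- `T` is a Euclidean minimum spanning tree of the point set `P`: a spanning tree of
the complete graph on `P` minimizing the total Euclidean edge length. -/
def IsEMST (P : Finset Pt) (T : Finset (Sym2 Pt)) : Prop :=
  EdgesOn P T ∧ IsTreeOn P T ∧
    ∀ T' : Finset (Sym2 Pt), EdgesOn P T' → IsTreeOn P T' → graphLength T ≤ graphLength T'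

/-!
A support `G` induces a connected graph on each hyperedge `s`, so it contains a spanning tree of `s`
and is at least as long as an EMST of `s`. Summing over the `k` hyperedges counts `G` exactly `k`
times, while edges shared between trees only shorten the union.
-/

lemma sum_biUnion_le_of_nonneg {ι α M : Type*} [DecidableEq α] [AddCommMonoid M] [Preorder M]
    [AddLeftMono M] {s : Finset ι} {t : ι → Finset α} {f : α → M}
    (hf : ∀ a ∈ s.biUnion t, 0 ≤ f a) :
    ∑ a ∈ s.biUnion t, f a ≤ ∑ i ∈ s, ∑ a ∈ t i, f a := by
  have himage : s.biUnion t = (s.sigma t).image Sigma.snd := by ext; simp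
  rw [himage] at hf ⊢
  exact (Finset.sum_image_le_of_nonneg hf).trans_eq (Finset.sum_sigma s t _)

lemma exists_le_support_subset_induce_isTree {α : Type*} {G : SimpleGraph α} {s : Set α}
    (hG : (G.induce s).Connected) : ∃ H ≤ G, H.support ⊆ s ∧ (H.induce s).IsTree := by
  obtain ⟨R, hRG, hR⟩ := hG.exists_isTree_le
  refine ⟨R.spanningCoe, (SimpleGraph.map_le_iff_le_comap _ _ _).2 hRG, ?_, ?_⟩
  · rw [SimpleGraph.support_spanningCoe]
    exact Subtype.coe_image_subset s _
  · rwa [SimpleGraph.induce_spanningCoe]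

lemma edgeLen_nonneg (e : Sym2 Pt) : 0 ≤ edgeLen e :=
  e.ind fun u v => dist_nonneg (x := u) (y := v)

lemma graphLength_mono {E F : Finset (Sym2 Pt)} (h : E ⊆ F) : graphLength E ≤ graphLength F :=
  Finset.sum_le_sum_of_subset_of_nonneg h fun e _ _ => edgeLen_nonneg e

lemma graphLength_biUnion_le_card_mul {ι : Type*} {I : Finset ι} {E : ι → Finset (Sym2 Pt)}
    {c : ℝ} (h : ∀ i ∈ I, graphLength (E i) ≤ c) :
    graphLength (I.biUnion E) ≤ I.card * c :=
  calc graphLength (I.biUnion E)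
    _ ≤ ∑ i ∈ I, graphLength (E i) := sum_biUnion_le_of_nonneg fun e _ => edgeLen_nonneg e
    _ ≤ I.card • c := Finset.sum_le_card_nsmul I _ c h
    _ = I.card * c := nsmul_eq_mul _ _

lemma EdgesOn.mono {V W : Finset Pt} {E : Finset (Sym2 Pt)} (hVW : V ⊆ W) (hE : EdgesOn V E) :
    EdgesOn W E :=
  fun e he => ⟨(hE e he).1, fun p hp => hVW ((hE e he).2 p hp)⟩

lemma EdgesOn.biUnion {ι : Type*} {I : Finset ι} {V : Finset Pt} {E : ι → Finset (Sym2 Pt)}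
    (h : ∀ i ∈ I, EdgesOn V (E i)) : EdgesOn V (I.biUnion E) := by
  intro e he
  obtain ⟨i, hi, hei⟩ := Finset.mem_biUnion.1 he
  exact h i hi e hei

lemma InducedConnected.mono {E F : Finset (Sym2 Pt)} {s : Finset Pt} (hEF : E ⊆ F)
    (hE : InducedConnected E s) : InducedConnected F s :=
  SimpleGraph.Connected.mono
    (SimpleGraph.comap_monotone _ (SimpleGraph.fromEdgeSet_mono (Finset.coe_subset.2 hEF))) hE

lemma InducedConnected.exists_subset_isTreeOn {E : Finset (Sym2 Pt)} {s : Finset Pt}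
    (hE : InducedConnected E s) : ∃ F ⊆ E, EdgesOn s F ∧ IsTreeOn s F := by
  obtain ⟨H, hHE, hHs, hH⟩ := exists_le_support_subset_induce_isTree hE
  have hsub : H.edgeSet ⊆ E := (SimpleGraph.le_fromEdgeSet_iff H _).1 hHE
  lift H.edgeSet to Finset (Sym2 Pt) using E.finite_toSet.subset hsub with F hF
  refine ⟨F, Finset.coe_subset.1 hsub, fun e he => ?_, ?_⟩
  · have heH : e ∈ H.edgeSet := hF ▸ he
    exact ⟨H.not_isDiag_of_mem_edgeSet heH,
      fun p hp => Set.mem_sym2_iff_subset.1 (SimpleGraph.edgeSet_subset_sym2_iff.2 hHs heH) hp⟩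
  · rwa [IsTreeOn, hF, SimpleGraph.fromEdgeSet_edgeSet]

lemma IsEMST.inducedConnected {s : Finset Pt} {T : Finset (Sym2 Pt)} (hT : IsEMST s T) :
    InducedConnected T s :=
  hT.2.1.connected

lemma IsEMST.graphLength_le_of_inducedConnected {s : Finset Pt} {T G : Finset (Sym2 Pt)}
    (hT : IsEMST s T) (hG : InducedConnected G s) : graphLength T ≤ graphLength G := by
  obtain ⟨F, hFG, hFs, hF⟩ := hG.exists_subset_isTreeOn
  exact (hT.2.2 F hFs hF).trans (graphLength_mono hFG)

/-- The union of Euclidean minimum spanning trees of the hyperedges is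
a support, and its total length is at most `k` times the total length of any support,
where `k` is the number of hyperedges. -/
theorem union_of_emsts_is_k_approximation (V : Finset Pt) (S : Finset (Finset Pt))
    (k : ℕ) (hk : S.card = k)
    (hs : ∀ s ∈ S, s.Nonempty ∧ s ⊆ V)
    (hcover : ∀ v ∈ V, ∃ s ∈ S, v ∈ s)
    (T : Finset Pt → Finset (Sym2 Pt)) (hT : ∀ s ∈ S, IsEMST s (T s)) :
    (EdgesOn V (S.biUnion T) ∧ ∀ s ∈ S, InducedConnected (S.biUnion T) s) ∧
    ∀ G : Finset (Sym2 Pt), EdgesOn V G → (∀ s ∈ S, InducedConnected G s) →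
      graphLength (S.biUnion T) ≤ (k : ℝ) * graphLength G := by
  refine ⟨⟨?_, fun s hsS => ?_⟩, fun G _ hG => ?_⟩
  · exact EdgesOn.biUnion fun s hsS => (hT s hsS).1.mono (hs s hsS).2
  · exact (hT s hsS).inducedConnected.mono (Finset.subset_biUnion_of_mem T hsS)
  · rw [← hk]
    exact graphLength_biUnion_le_card_mul fun s hsS =>
      (hT s hsS).graphLength_le_of_inducedConnected (hG s hsS)
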